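/- For all integers m, n ≥ 1, setting N = m + n, there exists a map S from the set of planar thin rectangles in F' to {1, −1} satisfying (Sq) and (Hex), and any two such maps are gauge equivalent. -/

import Mathlib

/-- A rectangle `r(σ, i, j)` on the toroidal grid of size `N`: a flow from the
generator `σ` to the generator `σ^{ij}`. -/
structure GridRect (N : ℕ) where
  perm : Equiv.Perm (Fin N)
  i : Fin N
  j : Fin N
  hij : i ≠ j

namespace GridRect

variable {N : ℕ}

/-- The ending generator `σ^{ij}` of the rectangle `r(σ, i, j)`. -/
def endPerm (r : GridRect N) : Equiv.Perm (Fin N) :=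
  (Equiv.swap r.i r.j).trans r.perm

/-- A rectangle is planar if `i < j` and `σ(i) < σ(j)`. -/
def Planar (r : GridRect N) : Prop := r.i < r.j ∧ r.perm r.i < r.perm r.j

/-- A planar rectangle is thin if `j = i + 1`. -/
def Thin (r : GridRect N) : Prop := (r.j : ℕ) = (r.i : ℕ) + 1

end GridRect

/-- The set `Σ` of generators `σ` (0-indexed: columns/rows `0,…,m+n−1`) with
`σ(j) ∈ {0,…,m}` for `j < m` and `σ(j) ∈ {m−1,…,m+n−1}` for `j ≥ m`. -/
def GenSet (m n : ℕ) : Set (Equiv.Perm (Fin (m + n))) :=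
  {σ | ∀ j : Fin (m + n), ((j : ℕ) < m → (σ j : ℕ) ≤ m) ∧ (m ≤ (j : ℕ) → m ≤ (σ j : ℕ) + 1)}

/-- The set `F'` of rectangles with both endpoint generators in `Σ`. -/
def FSet (m n : ℕ) : Set (GridRect (m + n)) :=
  {r | r.perm ∈ GenSet m n ∧ r.endPerm ∈ GenSet m n}

/-- The set of planar thin rectangles in `F'`. -/
def PTSet (m n : ℕ) : Set (GridRect (m + n)) :=
  {r | r ∈ FSet m n ∧ r.Planar ∧ r.Thin}

/-- The column `c` as an element of `Fin N`, given `c + 1 < N`. -/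
def colFin {N : ℕ} (c : ℕ) (hc : c + 1 < N) : Fin N := ⟨c, Nat.lt_of_succ_lt hc⟩

/-- The column `c + 1` as an element of `Fin N`, given `c + 1 < N`. -/
def colFin' {N : ℕ} (c : ℕ) (hc : c + 1 < N) : Fin N := ⟨c + 1, hc⟩

theorem colNe {N : ℕ} (c : ℕ) (hc : c + 1 < N) : colFin c hc ≠ colFin' c hc := by
  simp only [colFin, colFin', ne_eq, Fin.mk.injEq]
  omega

/-- The generator `σ·τ_c = σ^{c,c+1}`. -/
def tmul {N : ℕ} (σ : Equiv.Perm (Fin N)) (c : ℕ) (hc : c + 1 < N) : Equiv.Perm (Fin N) :=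
  (Equiv.swap (colFin c hc) (colFin' c hc)).trans σ

/-- The unique planar thin rectangle `e(σ, c)` connecting `σ` and `σ·τ_c`: it is
`r(σ, c, c+1)` if `σ(c) < σ(c+1)`, and `r(σ·τ_c, c, c+1)` otherwise. -/
def edgeRect {N : ℕ} (σ : Equiv.Perm (Fin N)) (c : ℕ) (hc : c + 1 < N) : GridRect N :=
  if σ (colFin c hc) < σ (colFin' c hc) then ⟨σ, colFin c hc, colFin' c hc, colNe c hc⟩
  else ⟨tmul σ c hc, colFin c hc, colFin' c hc, colNe c hc⟩

/-- Property (Sq) for a sign function on the planar thin rectangles in `F'`. -/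
def SqCond (m n : ℕ) (S : GridRect (m + n) → ℤ) : Prop :=
  ∀ (σ : Equiv.Perm (Fin (m + n))) (c d : ℕ) (hc : c + 1 < m + n) (hd : d + 1 < m + n),
    (c + 2 ≤ d ∨ d + 2 ≤ c) →
    σ ∈ GenSet m n → tmul σ c hc ∈ GenSet m n → tmul σ d hd ∈ GenSet m n →
    tmul (tmul σ c hc) d hd ∈ GenSet m n →
    S (edgeRect σ c hc) * S (edgeRect (tmul σ c hc) d hd) *
      S (edgeRect σ d hd) * S (edgeRect (tmul σ d hd) c hc) = -1

/-- Property (Hex) for a sign function on the planar thin rectangles in `F'`. -/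
def HexCond (m n : ℕ) (S : GridRect (m + n) → ℤ) : Prop :=
  ∀ (σ : Equiv.Perm (Fin (m + n))) (c : ℕ) (hc1 : c + 1 < m + n) (hc2 : c + 1 + 1 < m + n),
    σ ∈ GenSet m n → tmul σ c hc1 ∈ GenSet m n →
    tmul (tmul σ c hc1) (c + 1) hc2 ∈ GenSet m n →
    tmul (tmul (tmul σ c hc1) (c + 1) hc2) c hc1 ∈ GenSet m n →
    tmul (tmul σ (c + 1) hc2) c hc1 ∈ GenSet m n →
    tmul σ (c + 1) hc2 ∈ GenSet m n →
    S (edgeRect σ c hc1) * S (edgeRect (tmul σ c hc1) (c + 1) hc2) *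
      S (edgeRect (tmul (tmul σ c hc1) (c + 1) hc2) c hc1) *
      S (edgeRect (tmul (tmul (tmul σ c hc1) (c + 1) hc2) c hc1) (c + 1) hc2) *
      S (edgeRect (tmul (tmul σ (c + 1) hc2) c hc1) c hc1) *
      S (edgeRect (tmul σ (c + 1) hc2) (c + 1) hc2) = 1

/-- Gauge equivalence of two sign functions on a set `R` of rectangles. -/
def GaugeEquiv {N : ℕ} (R : Set (GridRect N)) (S S' : GridRect N → ℤ) : Prop :=
  ∃ u : Equiv.Perm (Fin N) → ℤ, (∀ σ, u σ = 1 ∨ u σ = -1) ∧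
    ∀ r ∈ R, S' r = u r.perm * S r * u r.endPerm
/-!
The edge from `σ` to `σ·τ_c` adds or removes the single inversion `{σ(c), σ(c+1)}`, so the
generators sit in the cube of sets of inversions. The exterior algebra sign of a cube has product
`-1` around every square and also around every braid hexagon, which spans a three-dimensional
subcube. A hexagon has three edges at `c` and three at `c + 1`, so the factor `(-1)^c` corrects the
second product to `1` without changing the first.

For two sign assignments, the product `S * S'` has product `1` around all squares and hexagons.
`GenSet m n` is closed under descents, and every two descents from a generator are completed by a
square or a hexagon to descending paths with a common end. As in Newman's lemma, `S * S'` therefore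
has a potential, defined by descending, and this potential is the gauge transformation.
-/


variable {N : ℕ}

section AdjacentTranspositions

variable (σ : Equiv.Perm (Fin N)) (c : ℕ) (hc : c + 1 < N)

theorem colFin_lt_colFin' : colFin c hc < colFin' c hc := Nat.lt_succ_self c

theorem colFin_succ (hd : c + 1 + 1 < N) : colFin (c + 1) hd = colFin' c hc := rfl

theorem tmul_apply (k : Fin N) :
    tmul σ c hc k = σ (Equiv.swap (colFin c hc) (colFin' c hc) k) := rfl

theorem tmul_symm_apply (x : Fin N) :
    (tmul σ c hc).symm x = Equiv.swap (colFin c hc) (colFin' c hc) (σ.symm x) := rfl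

theorem tmul_apply_colFin : tmul σ c hc (colFin c hc) = σ (colFin' c hc) := by
  rw [tmul_apply, Equiv.swap_apply_left]

theorem tmul_apply_colFin' : tmul σ c hc (colFin' c hc) = σ (colFin c hc) := by
  rw [tmul_apply, Equiv.swap_apply_right]

theorem tmul_apply_of_ne {k : Fin N} (h : (k : ℕ) ≠ c) (h' : (k : ℕ) ≠ c + 1) :
    tmul σ c hc k = σ k := by
  rw [tmul_apply, Equiv.swap_apply_of_ne_of_ne (Fin.ne_of_val_ne h) (Fin.ne_of_val_ne h')]

theorem tmul_apply_eq_ite (k : Fin N) :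
    tmul σ c hc k =
      if (k : ℕ) = c then σ (colFin' c hc)
      else if (k : ℕ) = c + 1 then σ (colFin c hc) else σ k := by
  simp only [tmul_apply, Equiv.swap_apply_def, Fin.ext_iff, colFin, colFin', apply_ite σ]

theorem tmul_tmul : tmul (tmul σ c hc) c hc = σ := by
  ext k
  simp only [tmul_apply, Equiv.swap_apply_self]

theorem tmul_comm {c d : ℕ} (hc : c + 1 < N) (hd : d + 1 < N) (hcd : c + 2 ≤ d ∨ d + 2 ≤ c) :
    tmul (tmul σ c hc) d hd = tmul (tmul σ d hd) c hc := by
  ext k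
  simp only [tmul_apply_eq_ite, colFin, colFin']
  split_ifs <;> first | rfl | omega

theorem tmul_braid (hd : c + 1 + 1 < N) :
    tmul (tmul (tmul σ c hc) (c + 1) hd) c hc =
      tmul (tmul (tmul σ (c + 1) hd) c hc) (c + 1) hd := by
  ext k
  simp only [tmul_apply_eq_ite, colFin, colFin']
  split_ifs <;> first | rfl | omega

theorem edgeRect_tmul : edgeRect (tmul σ c hc) c hc = edgeRect σ c hc := by
  have hne : σ (colFin c hc) ≠ σ (colFin' c hc) := σ.injective.ne (colNe c hc)
  simp only [edgeRect, tmul_apply_colFin, tmul_apply_colFin', tmul_tmul]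
  rcases hne.lt_or_gt with h | h
  · rw [if_neg h.not_gt, if_pos h]
  · rw [if_pos h, if_neg h.not_gt]

theorem tmul_apply_colFin_far {c d : ℕ} (hc : c + 1 < N) (hd : d + 1 < N)
    (hcd : c + 2 ≤ d ∨ d + 2 ≤ c) : tmul σ c hc (colFin d hd) = σ (colFin d hd) :=
  tmul_apply_of_ne σ c hc (by simp only [colFin]; omega) (by simp only [colFin]; omega)

theorem tmul_apply_colFin'_far {c d : ℕ} (hc : c + 1 < N) (hd : d + 1 < N)
    (hcd : c + 2 ≤ d ∨ d + 2 ≤ c) : tmul σ c hc (colFin' d hd) = σ (colFin' d hd) :=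
  tmul_apply_of_ne σ c hc (by simp only [colFin']; omega) (by simp only [colFin']; omega)

theorem tmul_apply_colFin'_succ (hd : c + 1 + 1 < N) :
    tmul σ c hc (colFin' (c + 1) hd) = σ (colFin' (c + 1) hd) :=
  tmul_apply_of_ne σ c hc (by simp only [colFin']; omega) (by simp only [colFin']; omega)

theorem tmul_succ_apply_colFin (hd : c + 1 + 1 < N) :
    tmul σ (c + 1) hd (colFin c hc) = σ (colFin c hc) :=
  tmul_apply_of_ne σ (c + 1) hd (by simp only [colFin]; omega) (by simp only [colFin]; omega)

theorem tmul_succ_apply_colFin' (hd : c + 1 + 1 < N) :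
    tmul σ (c + 1) hd (colFin' c hc) = σ (colFin' (c + 1) hd) :=
  tmul_apply_colFin σ (c + 1) hd

end AdjacentTranspositions

section CubeSign

variable {α β : Type*} [LinearOrder β] (rank : α → β)

/-- The sign `-1` if `a` precedes `b` in the order transported along `rank`, and `1` otherwise. -/
def comparisonSign (a b : α) : ℤˣ := if rank a < rank b then -1 else 1

theorem comparisonSign_self (a : α) : comparisonSign rank a a = 1 := if_neg (lt_irrefl _)

variable {rank} in
theorem comparisonSign_mul_swap (hrank : Function.Injective rank) {a b : α} (hab : a ≠ b) :
    comparisonSign rank a b * comparisonSign rank b a = -1 := by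
  rcases (hrank.ne hab).lt_or_gt with h | h <;> simp [comparisonSign, h, h.not_gt]

/-- The sign of the edge in direction `a` at the vertex `A` of the cube of finite subsets of `α`:
`-1` to the number of elements of `A` that come after `a`. This is the sign of `A ∧ a` in the
exterior algebra, so that the two directions of a square face anticommute. -/
def cubeSign (A : Finset α) (a : α) : ℤˣ := ∏ b ∈ A, comparisonSign rank a b

variable [DecidableEq α]

theorem prod_symmDiff_singleton (f : α → ℤˣ) (A : Finset α) (b : α) :
    ∏ x ∈ symmDiff A {b}, f x = (∏ x ∈ A, f x) * f b := by
  by_cases hb : b ∈ A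
  · have hA : symmDiff A {b} = A.erase b := by
      ext x
      by_cases hx : x = b <;> simp [Finset.mem_symmDiff, hx, hb]
    rw [hA, ← Finset.prod_erase_mul A f hb, mul_assoc, Int.units_mul_self, mul_one]
  · have hA : symmDiff A {b} = insert b A := by
      ext x
      by_cases hx : x = b <;> simp [Finset.mem_symmDiff, hx, hb]
    rw [hA, Finset.prod_insert hb, mul_comm]

theorem cubeSign_symmDiff_singleton (A : Finset α) (a b : α) :
    cubeSign rank (symmDiff A {b}) a = cubeSign rank A a * comparisonSign rank a b :=
  prod_symmDiff_singleton _ A b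

theorem cubeSign_symmDiff_self (A : Finset α) (a : α) :
    cubeSign rank (symmDiff A {a}) a = cubeSign rank A a := by
  rw [cubeSign_symmDiff_singleton, comparisonSign_self, mul_one]

variable {rank}

theorem cubeSign_square (hrank : Function.Injective rank) (A : Finset α) {a b : α} (hab : a ≠ b) :
    cubeSign rank A a * cubeSign rank (symmDiff A {a}) b *
      cubeSign rank A b * cubeSign rank (symmDiff A {b}) a = -1 := by
  simp only [cubeSign_symmDiff_singleton]
  set x := cubeSign rank A a
  set y := cubeSign rank A b
  calc
    _ = (x * x) * (y * y) * (comparisonSign rank a b * comparisonSign rank b a) := by ac_rfl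
    _ = -1 := by simp only [Int.units_mul_self, comparisonSign_mul_swap hrank hab, one_mul]

/-- The closed path joins the vertex `A` of a three-dimensional cube to the opposite vertex along
the directions `a`, `b`, `c`, and returns along the same directions. -/
theorem cubeSign_hexagon (hrank : Function.Injective rank) (A : Finset α) {a b c : α}
    (hab : a ≠ b) (hac : a ≠ c) (hbc : b ≠ c) :
    cubeSign rank A a * cubeSign rank (symmDiff A {a}) b *
      cubeSign rank (symmDiff (symmDiff A {a}) {b}) c *
      cubeSign rank (symmDiff (symmDiff (symmDiff A {a}) {b}) {c}) a *
      cubeSign rank (symmDiff (symmDiff A {c}) {b}) b * cubeSign rank (symmDiff A {c}) c = -1 := by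
  simp only [cubeSign_symmDiff_singleton, comparisonSign_self, mul_one]
  set x := cubeSign rank A a
  set y := cubeSign rank A b
  set z := cubeSign rank A c
  calc
    _ = (x * x) * (y * y) * (z * z) * (comparisonSign rank a b * comparisonSign rank b a) *
          (comparisonSign rank a c * comparisonSign rank c a) *
          (comparisonSign rank b c * comparisonSign rank c b) := by ac_rfl
    _ = -1 := by
      simp only [Int.units_mul_self, comparisonSign_mul_swap hrank hab,
        comparisonSign_mul_swap hrank hac, comparisonSign_mul_swap hrank hbc, mul_one,
        mul_neg, neg_neg]

end CubeSign

section Inversions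

/-- The inversions of `σ`, recorded as unordered pairs of values. -/
def inversions (σ : Equiv.Perm (Fin N)) : Finset (Sym2 (Fin N)) :=
  {z | σ.symm z.sup < σ.symm z.inf}

theorem swap_adjacent_lt_swap_adjacent_iff (c : ℕ) (hc : c + 1 < N) (p q : Fin N) :
    Equiv.swap (colFin c hc) (colFin' c hc) p < Equiv.swap (colFin c hc) (colFin' c hc) q ↔
      Xor (p < q) (s(p, q) = s(colFin c hc, colFin' c hc)) := by
  simp only [Equiv.swap_apply_def, Sym2.eq_iff, colFin, colFin', Fin.ext_iff, Xor, Fin.lt_def,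
    apply_ite Fin.val]
  split_ifs <;> omega

theorem sym2_mk_sup_inf {α : Type*} [LinearOrder α] (z : Sym2 α) : s(z.sup, z.inf) = z := by
  rw [Sym2.eq_swap]
  exact Sym2.sortEquiv.symm_apply_apply z

theorem inversions_tmul (σ : Equiv.Perm (Fin N)) (c : ℕ) (hc : c + 1 < N) :
    inversions (tmul σ c hc) =
      symmDiff (inversions σ) {s(σ (colFin c hc), σ (colFin' c hc))} := by
  ext z
  have hz : s(σ.symm z.sup, σ.symm z.inf) = s(colFin c hc, colFin' c hc) ↔
      z = s(σ (colFin c hc), σ (colFin' c hc)) := by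
    rw [← (Sym2.map.injective σ.injective).eq_iff]
    simp only [Sym2.map_mk, Equiv.apply_symm_apply, sym2_mk_sup_inf]
  simp only [inversions, Finset.mem_symmDiff, Finset.mem_filter_univ, Finset.mem_singleton,
    tmul_symm_apply, swap_adjacent_lt_swap_adjacent_iff, hz, Xor]

end Inversions

section SignAssignments

variable {M : Type*}

/-- The planar thin rectangles with both ends in `G`; for `G = GenSet m n` this is `PTSet m n`. -/
def planarThin (G : Set (Equiv.Perm (Fin N))) : Set (GridRect N) :=
  {r | (r.perm ∈ G ∧ r.endPerm ∈ G) ∧ r.Planar ∧ r.Thin}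

/-- `S` has product `z` around every commutation square with vertices in `G`. Condition (Sq) is the
case `G = GenSet m n`, `z = -1`. -/
def SquareHolonomyOn [Mul M] (G : Set (Equiv.Perm (Fin N))) (z : M) (S : GridRect N → M) : Prop :=
  ∀ (σ : Equiv.Perm (Fin N)) (c d : ℕ) (hc : c + 1 < N) (hd : d + 1 < N),
    (c + 2 ≤ d ∨ d + 2 ≤ c) →
    σ ∈ G → tmul σ c hc ∈ G → tmul σ d hd ∈ G → tmul (tmul σ c hc) d hd ∈ G →
    S (edgeRect σ c hc) * S (edgeRect (tmul σ c hc) d hd) *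
      S (edgeRect σ d hd) * S (edgeRect (tmul σ d hd) c hc) = z

/-- `S` has product `z` around every braid hexagon with vertices in `G`. Condition (Hex) is the
case `G = GenSet m n`, `z = 1`. -/
def HexagonHolonomyOn [Mul M] (G : Set (Equiv.Perm (Fin N))) (z : M) (S : GridRect N → M) : Prop :=
  ∀ (σ : Equiv.Perm (Fin N)) (c : ℕ) (hc : c + 1 < N) (hd : c + 1 + 1 < N),
    σ ∈ G → tmul σ c hc ∈ G →
    tmul (tmul σ c hc) (c + 1) hd ∈ G →
    tmul (tmul (tmul σ c hc) (c + 1) hd) c hc ∈ G →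
    tmul (tmul σ (c + 1) hd) c hc ∈ G →
    tmul σ (c + 1) hd ∈ G →
    S (edgeRect σ c hc) * S (edgeRect (tmul σ c hc) (c + 1) hd) *
      S (edgeRect (tmul (tmul σ c hc) (c + 1) hd) c hc) *
      S (edgeRect (tmul (tmul (tmul σ c hc) (c + 1) hd) c hc) (c + 1) hd) *
      S (edgeRect (tmul (tmul σ (c + 1) hd) c hc) c hc) *
      S (edgeRect (tmul σ (c + 1) hd) (c + 1) hd) = z

/-- A sign assignment on the planar thin rectangles with both ends in `G`: a `{1, -1}`-valued map
satisfying (Sq) and (Hex). -/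
def IsSignAssignment (G : Set (Equiv.Perm (Fin N))) (S : GridRect N → ℤ) : Prop :=
  (∀ r ∈ planarThin G, S r = 1 ∨ S r = -1) ∧ SquareHolonomyOn G (-1) S ∧ HexagonHolonomyOn G 1 S

variable {G : Set (Equiv.Perm (Fin N))}

theorem SquareHolonomyOn.mul [CommMonoid M] {z z' : M} {S S' : GridRect N → M}
    (h : SquareHolonomyOn G z S) (h' : SquareHolonomyOn G z' S') :
    SquareHolonomyOn G (z * z') (S * S') := by
  intro σ c d hc hd hcd hσ h₁ h₂ h₃
  rw [← h σ c d hc hd hcd hσ h₁ h₂ h₃, ← h' σ c d hc hd hcd hσ h₁ h₂ h₃]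
  simp only [Pi.mul_apply]
  ac_rfl

theorem HexagonHolonomyOn.mul [CommMonoid M] {z z' : M} {S S' : GridRect N → M}
    (h : HexagonHolonomyOn G z S) (h' : HexagonHolonomyOn G z' S') :
    HexagonHolonomyOn G (z * z') (S * S') := by
  intro σ c hc hd hσ h₁ h₂ h₃ h₄ h₅
  rw [← h σ c hc hd hσ h₁ h₂ h₃ h₄ h₅, ← h' σ c hc hd hσ h₁ h₂ h₃ h₄ h₅]
  simp only [Pi.mul_apply]
  ac_rfl

theorem edgeRect_mem_planarThin {σ : Equiv.Perm (Fin N)} {c : ℕ} {hc : c + 1 < N}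
    (hσ : σ ∈ G) (hτ : tmul σ c hc ∈ G) : edgeRect σ c hc ∈ planarThin G := by
  have hne : σ (colFin c hc) ≠ σ (colFin' c hc) := σ.injective.ne (colNe c hc)
  unfold edgeRect
  split_ifs with h
  · exact ⟨⟨hσ, hτ⟩, ⟨colFin_lt_colFin' c hc, h⟩, rfl⟩
  · have hend : tmul (tmul σ c hc) c hc ∈ G := by rwa [tmul_tmul]
    have hlt : tmul σ c hc (colFin c hc) < tmul σ c hc (colFin' c hc) := by
      rw [tmul_apply_colFin, tmul_apply_colFin']
      exact lt_of_le_of_ne (not_lt.mp h) hne.symm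
    exact ⟨⟨hτ, hend⟩, ⟨colFin_lt_colFin' c hc, hlt⟩, rfl⟩

theorem squareHolonomyOn_units_iff [Monoid M] {z : Mˣ} {S : GridRect N → Mˣ} {S' : GridRect N → M}
    (h : ∀ r ∈ planarThin G, (S r : M) = S' r) :
    SquareHolonomyOn G z S ↔ SquareHolonomyOn G (z : M) S' := by
  refine forall₅_congr fun σ c d hc hd => forall₅_congr fun hcd hσ h₁ h₂ h₃ => ?_
  have h₃' : tmul (tmul σ d hd) c hc ∈ G := by rwa [← tmul_comm σ hc hd hcd]
  rw [← h _ (edgeRect_mem_planarThin hσ h₁), ← h _ (edgeRect_mem_planarThin h₁ h₃),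
    ← h _ (edgeRect_mem_planarThin hσ h₂), ← h _ (edgeRect_mem_planarThin h₂ h₃')]
  norm_cast

theorem hexagonHolonomyOn_units_iff [Monoid M] {z : Mˣ} {S : GridRect N → Mˣ} {S' : GridRect N → M}
    (h : ∀ r ∈ planarThin G, (S r : M) = S' r) :
    HexagonHolonomyOn G z S ↔ HexagonHolonomyOn G (z : M) S' := by
  refine forall₅_congr fun σ c hc hd hσ => forall₅_congr fun h₁ h₂ h₃ h₄ h₅ => ?_
  have h₃' : tmul (tmul (tmul (tmul σ c hc) (c + 1) hd) c hc) (c + 1) hd ∈ G := by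
    rwa [tmul_braid, tmul_tmul]
  have h₄' : tmul (tmul (tmul σ (c + 1) hd) c hc) c hc ∈ G := by rwa [tmul_tmul]
  have h₅' : tmul (tmul σ (c + 1) hd) (c + 1) hd ∈ G := by rwa [tmul_tmul]
  rw [← h _ (edgeRect_mem_planarThin hσ h₁), ← h _ (edgeRect_mem_planarThin h₁ h₂),
    ← h _ (edgeRect_mem_planarThin h₂ h₃), ← h _ (edgeRect_mem_planarThin h₃ h₃'),
    ← h _ (edgeRect_mem_planarThin h₄ h₄'), ← h _ (edgeRect_mem_planarThin h₅ h₅')]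
  norm_cast

end SignAssignments

section Existence

/-- Orders unordered pairs lexicographically, smaller entry first. -/
def pairRank (z : Sym2 (Fin N)) : Fin N ×ₗ Fin N := toLex (z.inf, z.sup)

theorem pairRank_injective : Function.Injective (pairRank (N := N)) := by
  intro z w h
  rw [← Sym2.inf_eq_inf_and_sup_eq_sup]
  exact Prod.ext_iff.mp (toLex.injective h)

/-- The explicit sign assignment: the passage from `σ` to `σ·τ_c` adds or removes the single
inversion `{σ(c), σ(c+1)}`, and takes the sign of that edge in the cube of sets of inversions,
corrected by `(-1)^c`. -/
def inversionSign (r : GridRect N) : ℤˣ :=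
  (-1) ^ (r.i : ℕ) * cubeSign pairRank (inversions r.perm) s(r.perm r.i, r.perm r.j)

theorem inversionSign_edgeRect (σ : Equiv.Perm (Fin N)) (c : ℕ) (hc : c + 1 < N) :
    inversionSign (edgeRect σ c hc) =
      (-1) ^ c * cubeSign pairRank (inversions σ) s(σ (colFin c hc), σ (colFin' c hc)) := by
  unfold edgeRect
  split_ifs
  · rfl
  · simp only [inversionSign, tmul_apply_colFin, tmul_apply_colFin', inversions_tmul]
    rw [Sym2.eq_swap, cubeSign_symmDiff_self]
    rfl

theorem squareHolonomyOn_inversionSign (G : Set (Equiv.Perm (Fin N))) :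
    SquareHolonomyOn G (-1) inversionSign := by
  intro σ c d hc hd hcd _ _ _ _
  have hab : s(σ (colFin c hc), σ (colFin' c hc)) ≠ s(σ (colFin d hd), σ (colFin' d hd)) := by
    simp only [ne_eq, Sym2.eq_iff, σ.injective.eq_iff, colFin, colFin', Fin.mk.injEq]
    omega
  simp only [inversionSign_edgeRect, inversions_tmul, tmul_apply_colFin_far σ hc hd hcd,
    tmul_apply_colFin'_far σ hc hd hcd, tmul_apply_colFin_far σ hd hc hcd.symm,
    tmul_apply_colFin'_far σ hd hc hcd.symm]
  set a := s(σ (colFin c hc), σ (colFin' c hc))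
  set b := s(σ (colFin d hd), σ (colFin' d hd))
  set A := inversions σ
  calc
    _ = ((-1) ^ c * (-1) ^ c) * ((-1) ^ d * (-1) ^ d) *
          (cubeSign pairRank A a * cubeSign pairRank (symmDiff A {a}) b *
            cubeSign pairRank A b * cubeSign pairRank (symmDiff A {b}) a) := by ac_rfl
    _ = -1 := by
      simp only [Int.units_mul_self, cubeSign_square pairRank_injective A hab, one_mul]

theorem neg_one_pow_mul_neg_one_pow_succ (c : ℕ) : ((-1) ^ c * (-1) ^ (c + 1) : ℤˣ) = -1 := by
  rw [pow_succ, ← mul_assoc, Int.units_mul_self, one_mul]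

/-- The cube contributes `-1`, and the correction contributes `(-1)^(3c + 3(c+1)) = -1`. -/
theorem hexagonHolonomyOn_inversionSign (G : Set (Equiv.Perm (Fin N))) :
    HexagonHolonomyOn G 1 inversionSign := by
  intro σ c hc hd _ _ _ _ _ _
  have hxy : σ (colFin c hc) ≠ σ (colFin' c hc) := σ.injective.ne (colNe c hc)
  have hyz : σ (colFin' c hc) ≠ σ (colFin' (c + 1) hd) := σ.injective.ne (colNe (c + 1) hd)
  have hxz : σ (colFin c hc) ≠ σ (colFin' (c + 1) hd) :=
    σ.injective.ne ((colFin_lt_colFin' c hc).trans (colFin_lt_colFin' (c + 1) hd)).ne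
  simp only [inversionSign_edgeRect, inversions_tmul, colFin_succ c hc, tmul_apply_colFin,
    tmul_apply_colFin', tmul_apply_colFin'_succ, tmul_succ_apply_colFin, tmul_succ_apply_colFin',
    tmul_apply_colFin' σ (c + 1) hd]
  set x := σ (colFin c hc)
  set y := σ (colFin' c hc)
  set z := σ (colFin' (c + 1) hd)
  rw [Sym2.eq_swap (a := y) (b := x), Sym2.eq_swap (a := z) (b := x),
    Sym2.eq_swap (a := z) (b := y)]
  have hab : s(x, y) ≠ s(x, z) := by simp [hyz, hxz]
  have hac : s(x, y) ≠ s(y, z) := by simp [hxy, hxz]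
  have hbc : s(x, z) ≠ s(y, z) := by simp [hxy, hxz]
  have hcube := cubeSign_hexagon pairRank_injective (inversions σ) hab hac hbc
  set a := s(x, y)
  set b := s(x, z)
  set e := s(y, z)
  set A := inversions σ
  calc
    _ = ((-1) ^ c * (-1) ^ (c + 1)) * ((-1) ^ c * (-1) ^ (c + 1)) * ((-1) ^ c * (-1) ^ (c + 1)) *
          (cubeSign pairRank A a * cubeSign pairRank (symmDiff A {a}) b *
            cubeSign pairRank (symmDiff (symmDiff A {a}) {b}) e *
            cubeSign pairRank (symmDiff (symmDiff (symmDiff A {a}) {b}) {e}) a *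
            cubeSign pairRank (symmDiff (symmDiff A {e}) {b}) b *
            cubeSign pairRank (symmDiff A {e}) e) := by ac_rfl
    _ = 1 := by rw [hcube, neg_one_pow_mul_neg_one_pow_succ]; rfl

end Existence

section Uniqueness

/-- A weighted form of Newman's lemma. -/
theorem exists_potential_of_locally_coherent {α ι A β : Type*} [Mul A] [Nonempty A] [Preorder β]
    [WellFoundedLT β] (rank : α → β) (step : α → ι → Prop) (next : α → ι → α) (weight : α → ι → A)
    (hrank : ∀ x i, step x i → rank (next x i) < rank x)
    (hcoh : ∀ u : α → A, ∀ x,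
      (∀ y, rank y < rank x → ∀ k, step y k → u y = weight y k * u (next y k)) →
      ∀ i j, step x i → step x j → weight x i * u (next x i) = weight x j * u (next x j)) :
    ∃ u : α → A, ∀ x i, step x i → u x = weight x i * u (next x i) := by
  classical
  have hwf : WellFounded (fun y x => rank y < rank x) := InvImage.wf rank wellFounded_lt
  let rule (x : α) (u : ∀ y, rank y < rank x → A) : A :=
    if h : ∃ i, step x i then weight x h.choose * u (next x h.choose) (hrank x _ h.choose_spec)
    else Classical.arbitrary A
  refine ⟨hwf.fix rule, fun x => ?_⟩
  induction x using hwf.induction with | _ x ih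
  intro i hi
  have h : ∃ i, step x i := ⟨i, hi⟩
  calc
    hwf.fix rule x = weight x h.choose * hwf.fix rule (next x h.choose) := by
      rw [hwf.fix_eq rule x]
      exact dif_pos h
    _ = weight x i * hwf.fix rule (next x i) :=
      hcoh (hwf.fix rule) x ih _ _ h.choose_spec hi

/-- `σ` has a descent at the column `c`. -/
def IsDescent (σ : Equiv.Perm (Fin N)) (c : ℕ) (hc : c + 1 < N) : Prop :=
  σ (colFin' c hc) < σ (colFin c hc)

/-- `G` is a lower set of the right weak order on permutations. -/
def IsDescentClosed (G : Set (Equiv.Perm (Fin N))) : Prop :=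
  ∀ σ ∈ G, ∀ (c : ℕ) (hc : c + 1 < N), IsDescent σ c hc → tmul σ c hc ∈ G

/-- `u` trivializes the edge function `W` along all descents from elements of `G`. -/
def IsPotentialOn {A : Type*} [Mul A] (G : Set (Equiv.Perm (Fin N))) (W : GridRect N → A)
    (u : Equiv.Perm (Fin N) → A) : Prop :=
  ∀ σ ∈ G, ∀ (c : ℕ) (hc : c + 1 < N), IsDescent σ c hc →
    u σ = W (edgeRect σ c hc) * u (tmul σ c hc)

theorem IsDescent.toLex_tmul_lt {σ : Equiv.Perm (Fin N)} {c : ℕ} {hc : c + 1 < N}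
    (h : IsDescent σ c hc) : toLex ⇑(tmul σ c hc) < toLex ⇑σ :=
  Pi.lex_desc (colFin_lt_colFin' c hc).le h

theorem IsDescent.tmul_far {σ : Equiv.Perm (Fin N)} {c d : ℕ} {hc : c + 1 < N} {hd : d + 1 < N}
    (hcd : c + 2 ≤ d ∨ d + 2 ≤ c) (h : IsDescent σ d hd) : IsDescent (tmul σ c hc) d hd := by
  rwa [IsDescent, tmul_apply_colFin_far σ hc hd hcd, tmul_apply_colFin'_far σ hc hd hcd]

theorem isDescent_hexagon {σ : Equiv.Perm (Fin N)} {c : ℕ} {hc : c + 1 < N} {hd : c + 1 + 1 < N}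
    (h₁ : IsDescent σ c hc) (h₂ : IsDescent σ (c + 1) hd) :
    IsDescent (tmul σ c hc) (c + 1) hd ∧ IsDescent (tmul (tmul σ c hc) (c + 1) hd) c hc ∧
      IsDescent (tmul σ (c + 1) hd) c hc ∧
      IsDescent (tmul (tmul σ (c + 1) hd) c hc) (c + 1) hd := by
  have h₁₂ : σ (colFin' (c + 1) hd) < σ (colFin c hc) := h₂.trans h₁
  refine ⟨?_, ?_, ?_, ?_⟩
  · rwa [IsDescent, tmul_apply_colFin'_succ, colFin_succ c hc, tmul_apply_colFin']
  · rwa [IsDescent, tmul_succ_apply_colFin', tmul_succ_apply_colFin, tmul_apply_colFin'_succ,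
      tmul_apply_colFin]
  · rwa [IsDescent, tmul_succ_apply_colFin', tmul_succ_apply_colFin]
  · rwa [IsDescent, tmul_apply_colFin'_succ, tmul_apply_colFin' σ (c + 1) hd, colFin_succ c hc,
      tmul_apply_colFin' _ c hc, tmul_succ_apply_colFin]

theorem isDescentClosed_genSet (m n : ℕ) : IsDescentClosed (GenSet m n) := by
  intro σ hσ c hc hdesc k
  have hlt : (σ (colFin' c hc) : ℕ) < σ (colFin c hc) := hdesc
  have hleft := hσ (colFin c hc)
  have hright := hσ (colFin' c hc)
  have hk := hσ k
  rw [tmul_apply_eq_ite]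
  simp only [colFin, colFin'] at hleft hright hlt ⊢
  split_ifs <;> omega

variable {G : Set (Equiv.Perm (Fin N))} {W : GridRect N → ℤˣ} {u : Equiv.Perm (Fin N) → ℤˣ}

theorem SquareHolonomyOn.descents_coherent (hG : IsDescentClosed G) (hW : SquareHolonomyOn G 1 W)
    {σ : Equiv.Perm (Fin N)} (hσ : σ ∈ G) (hu : IsPotentialOn {τ ∈ G | toLex ⇑τ < toLex ⇑σ} W u)
    {c d : ℕ} {hc : c + 1 < N} {hd : d + 1 < N} (hcd : c + 2 ≤ d ∨ d + 2 ≤ c)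
    (hdesc₁ : IsDescent σ c hc) (hdesc₂ : IsDescent σ d hd) :
    W (edgeRect σ c hc) * u (tmul σ c hc) = W (edgeRect σ d hd) * u (tmul σ d hd) := by
  have hdesc₁₂ : IsDescent (tmul σ c hc) d hd := hdesc₂.tmul_far hcd
  have hdesc₂₁ : IsDescent (tmul σ d hd) c hc := hdesc₁.tmul_far hcd.symm
  have h₁ := hG σ hσ c hc hdesc₁
  have h₂ := hG σ hσ d hd hdesc₂
  have hprod := hW σ c d hc hd hcd hσ h₁ h₂ (hG _ h₁ d hd hdesc₁₂)
  rw [mul_assoc, mul_eq_one_iff_eq_inv, Int.units_inv_eq_self] at hprod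
  rw [hu _ ⟨h₁, hdesc₁.toLex_tmul_lt⟩ d hd hdesc₁₂, hu _ ⟨h₂, hdesc₂.toLex_tmul_lt⟩ c hc hdesc₂₁,
    tmul_comm σ hc hd hcd, ← mul_assoc, ← mul_assoc, hprod]

/-- Both sides descend from `σ` to the bottom vertex of the braid hexagon. -/
theorem HexagonHolonomyOn.descents_coherent (hG : IsDescentClosed G)
    (hW : HexagonHolonomyOn G 1 W) {σ : Equiv.Perm (Fin N)} (hσ : σ ∈ G)
    (hu : IsPotentialOn {τ ∈ G | toLex ⇑τ < toLex ⇑σ} W u)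
    {c : ℕ} {hc : c + 1 < N} {hd : c + 1 + 1 < N}
    (hdesc₁ : IsDescent σ c hc) (hdesc₂ : IsDescent σ (c + 1) hd) :
    W (edgeRect σ c hc) * u (tmul σ c hc) =
      W (edgeRect σ (c + 1) hd) * u (tmul σ (c + 1) hd) := by
  obtain ⟨hdesc₁₂, hdesc₁₂₁, hdesc₂₁, hdesc₂₁₂⟩ := isDescent_hexagon hdesc₁ hdesc₂
  have h₁ := hG σ hσ c hc hdesc₁
  have h₁₂ := hG _ h₁ (c + 1) hd hdesc₁₂
  have h₂ := hG σ hσ (c + 1) hd hdesc₂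
  have h₂₁ := hG _ h₂ c hc hdesc₂₁
  have hlt₁ := hdesc₁.toLex_tmul_lt
  have hlt₂ := hdesc₂.toLex_tmul_lt
  have hprod := hW σ c hc hd hσ h₁ h₁₂ (hG _ h₁₂ c hc hdesc₁₂₁) h₂₁ h₂
  rw [edgeRect_tmul (tmul σ (c + 1) hd) c hc, edgeRect_tmul σ (c + 1) hd, tmul_braid,
    edgeRect_tmul (tmul (tmul σ (c + 1) hd) c hc) (c + 1) hd, mul_assoc, mul_assoc,
    mul_eq_one_iff_eq_inv, Int.units_inv_eq_self] at hprod
  rw [hu _ ⟨h₁, hlt₁⟩ (c + 1) hd hdesc₁₂,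
    hu _ ⟨h₁₂, hdesc₁₂.toLex_tmul_lt.trans hlt₁⟩ c hc hdesc₁₂₁, hu _ ⟨h₂, hlt₂⟩ c hc hdesc₂₁,
    hu _ ⟨h₂₁, hdesc₂₁.toLex_tmul_lt.trans hlt₂⟩ (c + 1) hd hdesc₂₁₂, tmul_braid]
  rw [← mul_assoc, ← mul_assoc, hprod]
  ac_rfl

theorem exists_isPotentialOn (hG : IsDescentClosed G) (hsq : SquareHolonomyOn G 1 W)
    (hhex : HexagonHolonomyOn G 1 W) : ∃ u, IsPotentialOn G W u := by
  refine (exists_potential_of_locally_coherent (ι := {c : ℕ // c + 1 < N})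
    (fun σ : Equiv.Perm (Fin N) => toLex ⇑σ) (fun σ c => σ ∈ G ∧ IsDescent σ c.1 c.2)
    (fun σ c => tmul σ c.1 c.2) (fun σ c => W (edgeRect σ c.1 c.2))
    (fun σ c h => h.2.toLex_tmul_lt) ?_).imp
      fun u hu σ hσ c hc hdesc => hu σ ⟨c, hc⟩ ⟨hσ, hdesc⟩
  rintro u σ hu ⟨c, hc⟩ ⟨d, hd⟩ ⟨hσ, hdescc⟩ ⟨-, hdescd⟩
  have hpot : IsPotentialOn {τ ∈ G | toLex ⇑τ < toLex ⇑σ} W u :=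
    fun τ hτ c hc hdesc => hu τ hτ.2 ⟨c, hc⟩ ⟨hτ.1, hdesc⟩
  obtain hcd | rfl | rfl | rfl :
      (c + 2 ≤ d ∨ d + 2 ≤ c) ∨ c = d ∨ d = c + 1 ∨ c = d + 1 := by omega
  · exact hsq.descents_coherent hG hσ hpot hcd hdescc hdescd
  · rfl
  · exact hhex.descents_coherent hG hσ hpot hdescc hdescd
  · exact (hhex.descents_coherent hG hσ hpot hdescd hdescc).symm

theorem exists_isDescent_of_mem_planarThin {r : GridRect N} (hr : r ∈ planarThin G) :
    ∃ σ ∈ G, ∃ (c : ℕ) (hc : c + 1 < N), IsDescent σ c hc ∧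
      edgeRect σ c hc = r ∧ r.endPerm = σ ∧ r.perm = tmul σ c hc := by
  obtain ⟨τ, i, j, hij⟩ := r
  obtain ⟨⟨-, hend⟩, ⟨-, hlt⟩, hthin⟩ := hr
  have hc : (i : ℕ) + 1 < N := lt_of_eq_of_lt hthin.symm j.isLt
  obtain rfl : j = colFin' i hc := Fin.ext hthin
  have hdesc : IsDescent (tmul τ i hc) i hc := by
    rwa [IsDescent, tmul_apply_colFin, tmul_apply_colFin']
  refine ⟨tmul τ i hc, hend, i, hc, hdesc, ?_, rfl, (tmul_tmul τ i hc).symm⟩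
  rw [edgeRect_tmul]
  exact if_pos hlt

theorem exists_units_val_eqOn {α M : Type*} [Monoid M] {f : α → M} {R : Set α}
    (hf : ∀ r ∈ R, IsUnit (f r)) : ∃ g : α → Mˣ, ∀ r ∈ R, (g r : M) = f r := by
  classical
  refine ⟨fun r => if h : IsUnit (f r) then h.unit else 1, fun r hr => ?_⟩
  simp only [dif_pos (hf r hr), IsUnit.unit_spec]

theorem IsSignAssignment.gaugeEquiv (hG : IsDescentClosed G) {S S' : GridRect N → ℤ}
    (hS : IsSignAssignment G S) (hS' : IsSignAssignment G S') :
    GaugeEquiv (planarThin G) S S' := by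
  obtain ⟨hsign, hsq, hhex⟩ := hS
  obtain ⟨hsign', hsq', hhex'⟩ := hS'
  obtain ⟨W, hW⟩ : ∃ W : GridRect N → ℤˣ, ∀ r ∈ planarThin G, (W r : ℤ) = (S * S') r :=
    exists_units_val_eqOn fun r hr =>
      (Int.isUnit_iff.mpr (hsign r hr)).mul (Int.isUnit_iff.mpr (hsign' r hr))
  obtain ⟨u, hu⟩ := exists_isPotentialOn hG
    ((squareHolonomyOn_units_iff hW).mpr (hsq.mul hsq'))
    ((hexagonHolonomyOn_units_iff hW).mpr (hhex.mul hhex'))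
  refine ⟨fun σ => u σ, fun σ => Int.isUnit_iff.mp (u σ).isUnit, fun r hr => ?_⟩
  obtain ⟨σ, hσ, c, hc, hdesc, hedge, hend, hperm⟩ := exists_isDescent_of_mem_planarThin hr
  have hWr : W r = u r.perm * u r.endPerm := by
    rw [hend, hperm, hu σ hσ c hc hdesc, hedge, mul_left_comm, Int.units_mul_self, mul_one]
  have hSr : S r * S r = 1 := Int.isUnit_mul_self (Int.isUnit_iff.mpr (hsign r hr))
  calc
    S' r = S r * (S r * S' r) := by rw [← mul_assoc, hSr, one_mul]
    _ = S r * W r := by rw [hW r hr, Pi.mul_apply]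
    _ = u r.perm * S r * u r.endPerm := by rw [hWr, Units.val_mul]; ring

end Uniqueness

theorem exists_isSignAssignment (G : Set (Equiv.Perm (Fin N))) : ∃ S, IsSignAssignment G S :=
  ⟨fun r => inversionSign r, fun r _ => Int.isUnit_iff.mp (inversionSign r).isUnit,
    (squareHolonomyOn_units_iff fun _ _ => rfl).mp (squareHolonomyOn_inversionSign G),
    (hexagonHolonomyOn_units_iff fun _ _ => rfl).mp (hexagonHolonomyOn_inversionSign G)⟩

theorem planar_thin_sign_exists_unique_general {G : Set (Equiv.Perm (Fin N))}
    (hG : IsDescentClosed G) :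
    (∃ S, IsSignAssignment G S) ∧
      ∀ S S', IsSignAssignment G S → IsSignAssignment G S' → GaugeEquiv (planarThin G) S S' :=
  ⟨exists_isSignAssignment G, fun _ _ hS hS' => hS.gaugeEquiv hG hS'⟩

/-- There exists a `{1,−1}`-valued map on the planar thin rectangles in `F'` satisfying
(Sq) and (Hex), and any two such maps are gauge equivalent. -/
theorem planar_thin_sign_exists_unique (m n : ℕ) (hm : 1 ≤ m) (hn : 1 ≤ n) :
    (∃ S : GridRect (m + n) → ℤ,
      (∀ r ∈ PTSet m n, S r = 1 ∨ S r = -1) ∧ SqCond m n S ∧ HexCond m n S) ∧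
    (∀ S S' : GridRect (m + n) → ℤ,
      ((∀ r ∈ PTSet m n, S r = 1 ∨ S r = -1) ∧ SqCond m n S ∧ HexCond m n S) →
      ((∀ r ∈ PTSet m n, S' r = 1 ∨ S' r = -1) ∧ SqCond m n S' ∧ HexCond m n S') →
      GaugeEquiv (PTSet m n) S S') :=
  planar_thin_sign_exists_unique_general (isDescentClosed_genSet m n)
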